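/- Let μ ≥ 0 and λ ≥ 1 be real and let f belong to the class S*_{Σ,q}^η(μ,λ;φ). Then Ω·a₂² = (1/2)·(E₂ − E₁)·c₁² + (1/2)·E₁·(c₂ + d₂) and Θ·a₂² = (1/2)·E₁³·(c₂ + d₂). -/

import Mathlib

open Complex Metric Set

noncomputable def symQ (q x : ℝ) : ℝ := (Real.rpow q x - Real.rpow q (-x)) / (q - q⁻¹)

noncomputable def Dq (q : ℝ) (f : ℂ → ℂ) (z : ℂ) : ℂ :=
  if z = 0 then deriv f 0
  else (f ((q : ℂ) * z) - f (z / (q : ℂ))) / (((q : ℂ) - (q : ℂ)⁻¹) * z)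

def IsSchwarz (u : ℂ → ℂ) : Prop :=
  AnalyticOnNhd ℂ u (ball 0 1) ∧ u 0 = 0 ∧ ∀ z ∈ ball (0 : ℂ) 1, u z ∈ ball (0 : ℂ) 1

noncomputable def taylorCoeff (h : ℂ → ℂ) (n : ℕ) : ℂ := iteratedDeriv n h 0 / (n.factorial : ℂ)

noncomputable def Lcoef (q η : ℝ) (n : ℕ) : ℝ := symQ q (1 + η) / symQ q ((n : ℝ) + η)

noncomputable def Jop (q η : ℝ) (h : ℂ → ℂ) (z : ℂ) : ℂ :=
  ∑' n, (Lcoef q η n : ℂ) * taylorCoeff h n * z ^ n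

noncomputable def Phi (q η lam mu : ℝ) (h : ℂ → ℂ) (z : ℂ) : ℂ :=
  (2 * z * Dq q (Jop q η h) z ^ (lam : ℂ) / (Jop q η h z - Jop q η h (-z))) ^ (mu : ℂ) *
    (2 * Dq q (fun ζ => ζ * Dq q (Jop q η h) ζ) z ^ (lam : ℂ) /
        Dq q (fun ζ => Jop q η h ζ - Jop q η h (-ζ)) z) ^ ((1 - mu : ℝ) : ℂ)

noncomputable def M2v (q mu : ℝ) : ℝ := mu - (mu - 1) * symQ q 2
noncomputable def M3v (q mu : ℝ) : ℝ := mu - (mu - 1) * symQ q 3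
noncomputable def N2v (q mu : ℝ) : ℝ := mu - (mu - 1) * symQ q 2 ^ 2

noncomputable def Omegav (q η lam mu : ℝ) : ℝ :=
  2 * (lam * symQ q 3 - 1) * M3v q mu * Lcoef q η 3 +
    lam * (lam * M2v q mu ^ 2 - N2v q mu) * symQ q 2 ^ 2 * Lcoef q η 2 ^ 2

noncomputable def Thetav (q η lam mu E1 : ℝ) (E : ℕ → ℂ) : ℂ :=
  ((2 * (lam * symQ q 3 - 1) * M3v q mu * E1 ^ 2 * Lcoef q η 3 : ℝ) : ℂ) +
    (lam : ℂ) * (((lam * M2v q mu ^ 2 : ℝ) : ℂ) * (((E1 ^ 2 + 2 * E1 : ℝ) : ℂ) - 2 * E 2) -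
        ((N2v q mu * E1 ^ 2 : ℝ) : ℂ)) * ((symQ q 2 ^ 2 * Lcoef q η 2 ^ 2 : ℝ) : ℂ)

noncomputable def Gammav (q η lam : ℝ) : ℝ :=
  2 * (lam * symQ q 3 - 1) * Lcoef q η 3 + lam * (lam - 1) * symQ q 2 ^ 2 * Lcoef q η 2 ^ 2

noncomputable def Xiv (q η lam E1 : ℝ) (E : ℕ → ℂ) : ℂ :=
  ((2 * (lam * symQ q 3 - 1) * E1 ^ 2 * Lcoef q η 3 : ℝ) : ℂ) +
    (lam : ℂ) * ((((lam - 1) * E1 ^ 2 : ℝ) : ℂ) + 2 * (lam : ℂ) * ((E1 : ℂ) - E 2)) *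
      ((symQ q 2 ^ 2 * Lcoef q η 2 ^ 2 : ℝ) : ℂ)

noncomputable def Psiv (q η lam : ℝ) : ℝ :=
  2 * (lam * symQ q 3 - 1) * symQ q 3 * Lcoef q η 3 +
    lam * (lam - 1) * symQ q 2 ^ 4 * Lcoef q η 2 ^ 2

noncomputable def Upsv (q η lam E1 : ℝ) (E : ℕ → ℂ) : ℂ :=
  ((2 * (lam * symQ q 3 - 1) * symQ q 3 * E1 ^ 2 * Lcoef q η 3 : ℝ) : ℂ) +
    (lam : ℂ) * ((((lam - 1) * E1 ^ 2 : ℝ) : ℂ) + 2 * (lam : ℂ) * ((E1 : ℂ) - E 2)) *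
      ((symQ q 2 ^ 4 * Lcoef q η 2 ^ 2 : ℝ) : ℂ)

/-! Only the behaviour at the origin matters: one compares the second-order expansions at `0` of
both sides of `Phi h = φ ∘ u`. With `P F` the quotient `2 z (D_q F)^λ / (F(z) - F(-z))`, the second
factor of `Phi` is `P` applied to `z D_q (J h)`, so `Phi h = (P (J h))^μ (P (z D_q (J h)))^(1-μ)`,
and each `D_q` multiplies the coefficient of `z^n` by `[n]_q`. For `h = f` and for its inverse
`g = w - a₂ w² + (2 a₂² - a₃) w³ + ⋯` the linear terms give `d₁ = -c₁` and `c₁` in terms of `a₂`;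
adding the quadratic terms cancels `a₃`, which is the relation for `Ω`, and eliminating `c₁` turns
it into the relation for `Θ`. -/

open Filter Topology Asymptotics FormalMultilinearSeries

section TwoJet

variable {𝕜 : Type*} [NontriviallyNormedField 𝕜]

/-- The second-order expansion `h z = a + b z + c z² + o(z²)` as `z → 0`, `z ≠ 0`. The value `h 0`
is left free, since quotients such as `Phi` take a junk value at the origin. -/
def HasTwoJet (h : 𝕜 → 𝕜) (a b c : 𝕜) : Prop :=
  (fun z => h z - (a + b * z + c * z ^ 2)) =o[𝓝[≠] 0] fun z => z ^ 2

theorem isLittleO_pow_pow_nhdsNE {m n : ℕ} (hmn : m < n) :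
    (fun z : 𝕜 => z ^ n) =o[𝓝[≠] 0] fun z => z ^ m :=
  (isLittleO_pow_pow hmn).mono nhdsWithin_le_nhds

theorem isLittleO_sq_nhdsNE : (fun z : 𝕜 => z ^ 2) =o[𝓝[≠] 0] fun z => z := by
  simpa using isLittleO_pow_pow_nhdsNE (𝕜 := 𝕜) one_lt_two

namespace HasTwoJet

variable {F h h' : 𝕜 → 𝕜} {A B C a b c a' b' c' : 𝕜}

theorem congr' (hh : HasTwoJet h a b c) (heq : h =ᶠ[𝓝[≠] 0] h') : HasTwoJet h' a b c :=
  IsLittleO.congr' hh (heq.mono fun z hz => by simp only [hz]) .rfl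

theorem polynomial (a b c : 𝕜) : HasTwoJet (fun z => a + b * z + c * z ^ 2) a b c := by
  simp [HasTwoJet]

theorem const (a : 𝕜) : HasTwoJet (fun _ => a) a 0 0 := by
  simpa using polynomial a 0 0

theorem linear (b : 𝕜) : HasTwoJet (fun z => b * z) 0 b 0 := by
  simpa using polynomial 0 b 0

theorem tendsto (hh : HasTwoJet h a b c) : Tendsto h (𝓝[≠] 0) (𝓝 a) := by
  have hpoly : Tendsto (fun z : 𝕜 => a + b * z + c * z ^ 2) (𝓝[≠] 0) (𝓝 a) :=
    (Continuous.tendsto' (by fun_prop) 0 a (by simp)).mono_left nhdsWithin_le_nhds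
  have hsq : Tendsto (fun z : 𝕜 => z ^ 2) (𝓝[≠] 0) (𝓝 0) :=
    (Continuous.tendsto' (by fun_prop) 0 0 (by simp)).mono_left nhdsWithin_le_nhds
  simpa using (hh.isBigO.trans_tendsto hsq).add hpoly

theorem add (hh : HasTwoJet h a b c) (hh' : HasTwoJet h' a' b' c') :
    HasTwoJet (fun z => h z + h' z) (a + a') (b + b') (c + c') :=
  (IsLittleO.add hh hh').congr_left fun z => by ring

theorem mul (hh : HasTwoJet h a b c) (hh' : HasTwoJet h' a' b' c') :
    HasTwoJet (fun z => h z * h' z) (a * a') (a * b' + b * a') (a * c' + b * b' + c * a') := by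
  have hleft := hh.mul_isBigO (hh'.tendsto.isBigO_one 𝕜)
  have hright := ((polynomial a b c).tendsto.isBigO_one 𝕜).mul_isLittleO hh'
  have htail := (((polynomial (b * c' + c * b') (c * c') 0).tendsto.isBigO_one 𝕜).mul_isLittleO
    (isLittleO_pow_pow_nhdsNE (𝕜 := 𝕜) (Nat.lt_succ_self 2)))
  simp only [mul_one, one_mul] at hleft hright htail
  exact ((hleft.add hright).add htail).congr_left fun z => by ring

theorem const_mul (x : 𝕜) (hh : HasTwoJet h a b c) :
    HasTwoJet (fun z => x * h z) (x * a) (x * b) (x * c) := by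
  simpa using (const x).mul hh

theorem inv (hh : HasTwoJet h a b c) (ha : a ≠ 0) :
    HasTwoJet (fun z => (h z)⁻¹) a⁻¹ (-b / a ^ 2) (b ^ 2 / a ^ 3 - c / a ^ 2) := by
  have hprod : HasTwoJet
      (fun z => h z * (a⁻¹ + -b / a ^ 2 * z + (b ^ 2 / a ^ 3 - c / a ^ 2) * z ^ 2)) 1 0 0 := by
    convert hh.mul (polynomial a⁻¹ (-b / a ^ 2) (b ^ 2 / a ^ 3 - c / a ^ 2)) using 1 <;>
      field_simp <;> ring
  have hquot := ((hh.tendsto.inv₀ ha).isBigO_one 𝕜).mul_isLittleO hprod.neg_left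
  refine hquot.congr' ?_ (by simp)
  filter_upwards [hh.tendsto.eventually_ne ha] with z hz
  field_simp
  ring

theorem comp (hF : HasTwoJet F A B C) (hF0 : F 0 = A) (hh : HasTwoJet h 0 b c) :
    HasTwoJet (fun z => F (h z)) A (B * b) (B * c + C * b ^ 2) := by
  have hF' : (fun w => F w - (A + B * w + C * w ^ 2)) =o[𝓝 0] fun w => w ^ 2 := by
    have huniv : insert (0 : 𝕜) {0}ᶜ = univ := union_compl_self _
    rwa [HasTwoJet, ← isLittleO_insert (by simp [hF0]), huniv, nhdsWithin_univ] at hF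
  have hO : h =O[𝓝[≠] 0] fun z => z := by
    have hsq := (isLittleO_sq_nhdsNE (𝕜 := 𝕜)).isBigO
    have hlin := (isBigO_refl (fun z : 𝕜 => z) (𝓝[≠] 0)).const_mul_left b
    exact ((hh.isBigO.trans hsq).add (hlin.add (hsq.const_mul_left c))).congr_left
      fun z => by ring
  have herr := (hF'.comp_tendsto hh.tendsto).trans_isBigO (hO.pow 2)
  have hquad := ((const A).add (hh.const_mul B)).add ((hh.mul hh).const_mul C)
  exact (herr.add hquad).congr_left fun z => by simp only [Function.comp_apply]; ring

theorem comp_of_eventually_ne (hF : HasTwoJet F A B C) (hh : HasTwoJet h 0 b c)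
    (hne : ∀ᶠ z in 𝓝[≠] 0, h z ≠ 0) :
    HasTwoJet (fun z => F (h z)) A (B * b) (B * c + C * b ^ 2) := by
  classical
  have hupdate : HasTwoJet (Function.update F 0 A) A B C :=
    hF.congr' (eventually_mem_nhdsWithin.mono fun w hw => (Function.update_of_ne hw A F).symm)
  exact (hupdate.comp (by simp) hh).congr' (hne.mono fun z hz => Function.update_of_ne hz A F)

theorem comp_mul_left (hh : HasTwoJet h a b c) {s : 𝕜} (hs : s ≠ 0) :
    HasTwoJet (fun z => h (s * z)) a (b * s) (c * s ^ 2) := by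
  simpa using hh.comp_of_eventually_ne (linear s)
    (eventually_mem_nhdsWithin.mono fun z hz => mul_ne_zero hs hz)

theorem eq_zero (hh : HasTwoJet (fun _ => 0) a b c) : a = 0 ∧ b = 0 ∧ c = 0 := by
  obtain rfl : a = 0 := tendsto_nhds_unique tendsto_const_nhds hh.tendsto |>.symm
  have hne : ∀ᶠ z : 𝕜 in 𝓝[≠] 0, z ≠ 0 := eventually_mem_nhdsWithin
  obtain rfl : b = 0 := by
    by_contra hb
    have hlin : (fun z => b * z) =o[𝓝[≠] 0] fun z => z :=
      ((hh.trans isLittleO_sq_nhdsNE).add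
        (isLittleO_sq_nhdsNE.const_mul_left c)).neg_left.congr_left fun z => by ring
    exact isLittleO_irrefl hne.frequently ((isLittleO_const_mul_left_iff hb).1 hlin)
  refine ⟨rfl, rfl, ?_⟩
  by_contra hc
  have hquad : (fun z => c * z ^ 2) =o[𝓝[≠] 0] fun z => z ^ 2 :=
    hh.neg_left.congr_left fun z => by ring
  exact isLittleO_irrefl (hne.mono fun z hz => pow_ne_zero 2 hz).frequently
    ((isLittleO_const_mul_left_iff hc).1 hquad)

theorem unique (hh : HasTwoJet h a b c) (hh' : HasTwoJet h a' b' c') :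
    a = a' ∧ b = b' ∧ c = c' := by
  have hsub : HasTwoJet (fun _ => 0) (a + -1 * a') (b + -1 * b') (c + -1 * c') := by
    simpa using hh.add (hh'.const_mul (-1))
  simpa [← sub_eq_add_neg, sub_eq_zero] using hsub.eq_zero

theorem of_hasFPowerSeriesAt {p : FormalMultilinearSeries 𝕜 𝕜 𝕜}
    (hp : HasFPowerSeriesAt h p 0) : HasTwoJet h (p.coeff 0) (p.coeff 1) (p.coeff 2) := by
  have hO : (fun z => h z - (p.coeff 0 + p.coeff 1 * z + p.coeff 2 * z ^ 2))
      =O[𝓝 0] fun z : 𝕜 => z ^ 3 := by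
    refine ((hp.isBigO_sub_partialSum_pow 3).congr_left fun z => ?_).trans
      (isBigO_of_le _ fun z => by simp)
    simp [partialSum, Finset.sum_range_succ, mul_comm]
  exact (hO.mono nhdsWithin_le_nhds).trans_isLittleO (isLittleO_pow_pow_nhdsNE (Nat.lt_succ_self 2))

theorem div_id_of_hasFPowerSeriesAt {p : FormalMultilinearSeries 𝕜 𝕜 𝕜}
    (hp : HasFPowerSeriesAt h p 0) (h0 : h 0 = 0) :
    HasTwoJet (fun z => h z / z) (p.coeff 1) (p.coeff 2) (p.coeff 3) := by
  have hslope := of_hasFPowerSeriesAt hp.has_fpower_series_dslope_fslope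
  simp only [coeff_fslope] at hslope
  refine hslope.congr' ?_
  filter_upwards [eventually_mem_nhdsWithin] with z hz
  rw [dslope_of_ne _ hz, slope_def_field, h0, sub_zero, sub_zero]

end HasTwoJet

theorem HasTwoJet.eq_of_left_inverse {f g : 𝕜 → 𝕜} {a₂ a₃ b₁ b₂ b₃ : 𝕜}
    (hf : HasTwoJet (fun z => f z / z) 1 a₂ a₃) (hg : HasTwoJet (fun w => g w / w) b₁ b₂ b₃)
    (hgf : ∀ᶠ z in 𝓝[≠] 0, g (f z) = z) :
    b₁ = 1 ∧ b₂ = -a₂ ∧ b₃ = 2 * a₂ ^ 2 - a₃ := by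
  have hz : ∀ᶠ z : 𝕜 in 𝓝[≠] 0, z ≠ 0 := eventually_mem_nhdsWithin
  have hne : ∀ᶠ z in 𝓝[≠] 0, f z ≠ 0 :=
    (hf.tendsto.eventually_ne one_ne_zero).mono fun z hz => (div_ne_zero_iff.1 hz).1
  have hfjet : HasTwoJet f 0 1 a₂ := by
    have hmul := (linear 1).mul hf
    simp only [zero_mul, mul_one, one_mul, zero_add, add_zero] at hmul
    exact hmul.congr' (hz.mono fun z hz => mul_div_cancel₀ _ hz)
  have hcomp := hf.mul (hg.comp_of_eventually_ne hfjet hne)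
  have hone : (fun z => f z / z * (g (f z) / f z)) =ᶠ[𝓝[≠] 0] fun _ => 1 := by
    filter_upwards [hz, hne, hgf] with z hz hfz hgfz
    rw [hgfz, div_mul_div_comm, mul_comm z, div_self (mul_ne_zero hfz hz)]
  obtain ⟨hb₁, hb₂, hb₃⟩ := (hcomp.congr' hone).unique (const 1)
  obtain rfl : b₁ = 1 := by linear_combination hb₁
  obtain rfl : b₂ = -a₂ := by linear_combination hb₂
  exact ⟨rfl, rfl, by linear_combination hb₃⟩

end TwoJet

section PowerSeries

variable {𝕜 : Type*} [NontriviallyNormedField 𝕜] {t : ℕ → 𝕜}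

theorem radius_ofScalars_pos {r : 𝕜} (hr : r ≠ 0) (hs : Summable fun n => t n * r ^ n) :
    0 < (ofScalars 𝕜 t).radius := by
  have hle : (‖r‖₊ : ENNReal) ≤ (ofScalars 𝕜 t).radius := by
    refine le_radius_of_tendsto _ (l := 0) ?_
    simpa [ofScalars_norm] using hs.tendsto_atTop_zero.norm
  exact lt_of_lt_of_le (by simpa using hr) hle

theorem apply_zero_of_hasFPowerSeriesAt {h : 𝕜 → 𝕜}
    (ht : HasFPowerSeriesAt h (ofScalars 𝕜 t) 0) : h 0 = t 0 := by
  simpa using (ht.coeff_zero ![]).symm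

theorem coeff_eq_of_left_inverse {f g : 𝕜 → 𝕜} {a b : ℕ → 𝕜}
    (hf : HasFPowerSeriesAt f (ofScalars 𝕜 a) 0) (ha0 : a 0 = 0) (ha1 : a 1 = 1)
    (hg : HasFPowerSeriesAt g (ofScalars 𝕜 b) 0) (hgf : ∀ᶠ z in 𝓝 0, g (f z) = z) :
    b 0 = 0 ∧ b 1 = 1 ∧ b 2 = -a 2 ∧ b 3 = 2 * a 2 ^ 2 - a 3 := by
  have hf0 : f 0 = 0 := (apply_zero_of_hasFPowerSeriesAt hf).trans ha0
  have hg0 : g 0 = 0 := by simpa [hf0] using hgf.self_of_nhds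
  have hfjet : HasTwoJet (fun z => f z / z) 1 (a 2) (a 3) := by
    simpa only [coeff_ofScalars, ha1] using HasTwoJet.div_id_of_hasFPowerSeriesAt hf hf0
  have hgjet : HasTwoJet (fun w => g w / w) (b 1) (b 2) (b 3) := by
    simpa only [coeff_ofScalars] using HasTwoJet.div_id_of_hasFPowerSeriesAt hg hg0
  exact ⟨(apply_zero_of_hasFPowerSeriesAt hg).symm.trans hg0,
    hfjet.eq_of_left_inverse hgjet (hgf.filter_mono nhdsWithin_le_nhds)⟩

variable [CompleteSpace 𝕜]

theorem hasFPowerSeriesAt_tsum (ht : 0 < (ofScalars 𝕜 t).radius) :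
    HasFPowerSeriesAt (fun z => ∑' n, t n * z ^ n) (ofScalars 𝕜 t) 0 := by
  convert ((ofScalars 𝕜 t).hasFPowerSeriesOnBall ht).hasFPowerSeriesAt using 1
  exact (ofScalarsSum_eq_tsum t).symm

/-- A nonzero value of `∑' n, t n * z ^ n` is not the junk value of a divergent sum, so the series
converges at some `z ≠ 0`. -/
theorem hasFPowerSeriesAt_of_eq_tsum {h : 𝕜 → 𝕜}
    (heq : ∀ᶠ z in 𝓝 0, h z = ∑' n, t n * z ^ n) (hne : ∃ᶠ z in 𝓝[≠] 0, h z ≠ 0) :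
    HasFPowerSeriesAt h (ofScalars 𝕜 t) 0 := by
  obtain ⟨r, hhr, her, hr⟩ := (hne.and_eventually
    ((heq.filter_mono nhdsWithin_le_nhds).and eventually_mem_nhdsWithin)).exists
  have hsum : Summable fun n => t n * r ^ n := by
    by_contra hdiv
    exact hhr (her.trans (tsum_eq_zero_of_not_summable hdiv))
  exact (hasFPowerSeriesAt_tsum (radius_ofScalars_pos hr hsum)).congr (heq.mono fun z hz => hz.symm)

theorem hasFPowerSeriesAt_of_eq_tsum_of_continuousAt {h : 𝕜 → 𝕜}
    (heq : ∀ᶠ z in 𝓝 0, h z = ∑' n, t n * z ^ n) (hcont : ContinuousAt h 0) (h0 : h 0 ≠ 0) :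
    HasFPowerSeriesAt h (ofScalars 𝕜 t) 0 :=
  hasFPowerSeriesAt_of_eq_tsum heq
    ((hcont.eventually_ne h0).filter_mono nhdsWithin_le_nhds).frequently

end PowerSeries

theorem HasTwoJet.cpow {h : ℂ → ℂ} {b c : ℂ} (hh : HasTwoJet h 1 b c) (s : ℂ) :
    HasTwoJet (fun z => h z ^ s) 1 (s * b) (s * c + s * (s - 1) / 2 * b ^ 2) := by
  have hchoose : Ring.choose s 2 = s * (s - 1) / 2 := by
    simp [Ring.choose_eq_smul, descPochhammer_succ_right, Polynomial.smeval_mul,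
      Polynomial.smeval_sub, div_eq_inv_mul]
  have hbinom : HasTwoJet (fun x : ℂ => (1 + x) ^ s) 1 s (s * (s - 1) / 2) := by
    simpa [binomialSeries, coeff_ofScalars, hchoose] using
      of_hasFPowerSeriesAt (one_add_cpow_hasFPowerSeriesAt_zero (a := s))
  have hsub : HasTwoJet (fun z => -1 + h z) 0 b c := by
    simpa using (const (-1)).add hh
  simpa using hbinom.comp (by simp) hsub

theorem hasFPowerSeriesAt_taylorCoeff {h : ℂ → ℂ} (hh : AnalyticAt ℂ h 0) :
    HasFPowerSeriesAt h (ofScalars ℂ (taylorCoeff h)) 0 :=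
  hh.hasFPowerSeriesAt

theorem taylorCoeff_eq_of_hasFPowerSeriesAt {h : ℂ → ℂ} {t : ℕ → ℂ}
    (ht : HasFPowerSeriesAt h (ofScalars ℂ t) 0) : taylorCoeff h = t :=
  ofScalars_series_injective ℂ ℂ <|
    (hasFPowerSeriesAt_taylorCoeff ht.analyticAt).eq_formalMultilinearSeries ht

theorem hasFPowerSeriesAt_of_normalized {f : ℂ → ℂ} {a : ℕ → ℂ} (hf0 : f 0 = 0)
    (hf'0 : deriv f 0 = 1) (hfa : ∀ᶠ z in 𝓝 0, f z = ∑' n, a n * z ^ n) :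
    HasFPowerSeriesAt f (ofScalars ℂ a) 0 ∧ a 0 = 0 ∧ a 1 = 1 := by
  have hderiv : HasDerivAt f 1 0 :=
    hf'0 ▸ (differentiableAt_of_deriv_ne_zero (hf'0.trans_ne one_ne_zero)).hasDerivAt
  have hf := hasFPowerSeriesAt_of_eq_tsum hfa (hderiv.eventually_ne one_ne_zero).frequently
  refine ⟨hf, (apply_zero_of_hasFPowerSeriesAt hf).symm.trans hf0, ?_⟩
  rw [← taylorCoeff_eq_of_hasFPowerSeriesAt hf]
  simp [taylorCoeff, hf'0]

section SymmetricQCalculus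

variable {q : ℝ}

theorem symQ_natCast (q : ℝ) (n : ℕ) : symQ q n = (q ^ n - q⁻¹ ^ n) / (q - q⁻¹) := by
  simp [symQ, Real.rpow_neg_natCast]

theorem symQ_eq_sinh_div_sinh (hq0 : 0 < q) (x : ℝ) :
    symQ q x = Real.sinh (x * Real.log q) / Real.sinh (Real.log q) := by
  have hexp (y : ℝ) : Real.exp (y * Real.log q) = q ^ y := by
    rw [Real.rpow_def_of_pos hq0, mul_comm]
  rw [symQ, Real.sinh_eq, Real.sinh_eq, div_div_div_cancel_right₀ two_ne_zero, ← neg_mul, hexp,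
    hexp, Real.exp_neg, Real.exp_log hq0]
  rfl

theorem symQ_strictMono (hq0 : 0 < q) (hq1 : q ≠ 1) : StrictMono (symQ q) := by
  intro x y hxy
  rw [symQ_eq_sinh_div_sinh hq0, symQ_eq_sinh_div_sinh hq0]
  rcases (Real.log_ne_zero_of_pos_of_ne_one hq0 hq1).lt_or_gt with hlog | hlog
  · rw [div_lt_div_right_of_neg (Real.sinh_neg_iff.2 hlog), Real.sinh_lt_sinh]
    exact mul_lt_mul_of_neg_right hxy hlog
  · rw [div_lt_div_iff_of_pos_right (Real.sinh_pos_iff.2 hlog), Real.sinh_lt_sinh]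
    exact mul_lt_mul_of_pos_right hxy hlog

theorem symQ_pos (hq0 : 0 < q) (hq1 : q ≠ 1) {x : ℝ} (hx : 0 < x) : 0 < symQ q x := by
  simpa [symQ] using symQ_strictMono hq0 hq1 hx

theorem Dq_eq_of_ne_zero (hq : q ≠ 0) (F : ℂ → ℂ) {z : ℂ} (hz : z ≠ 0) :
    Dq q F z = q / (q - (q : ℂ)⁻¹) * (F (q * z) / (q * z)) +
      -(q : ℂ)⁻¹ / (q - (q : ℂ)⁻¹) * (F ((q : ℂ)⁻¹ * z) / ((q : ℂ)⁻¹ * z)) := by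
  have hqC : (q : ℂ) ≠ 0 := by exact_mod_cast hq
  rw [Dq, if_neg hz, div_eq_inv_mul z]
  generalize (q : ℂ) - (q : ℂ)⁻¹ = δ
  field_simp
  ring

theorem hasTwoJet_Dq (hq : q - q⁻¹ ≠ 0) {F : ℂ → ℂ} {a b c : ℂ}
    (hF : HasTwoJet (fun z => F z / z) a b c) :
    HasTwoJet (Dq q F) a (symQ q 2 * b) (symQ q 3 * c) := by
  have hq0 : q ≠ 0 := by rintro rfl; simp at hq
  have hqC : (q : ℂ) ≠ 0 := by exact_mod_cast hq0
  have hδ : (q : ℂ) - (q : ℂ)⁻¹ ≠ 0 := by exact_mod_cast hq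
  have htwo : (symQ q 2 : ℂ) = (q ^ 2 - (q : ℂ)⁻¹ ^ 2) / (q - (q : ℂ)⁻¹) := by
    exact_mod_cast congrArg ((↑) : ℝ → ℂ) (symQ_natCast q 2)
  have hthree : (symQ q 3 : ℂ) = (q ^ 3 - (q : ℂ)⁻¹ ^ 3) / (q - (q : ℂ)⁻¹) := by
    exact_mod_cast congrArg ((↑) : ℝ → ℂ) (symQ_natCast q 3)
  have hjet := ((hF.comp_mul_left hqC).const_mul (q / (q - (q : ℂ)⁻¹))).add
    ((hF.comp_mul_left (inv_ne_zero hqC)).const_mul (-(q : ℂ)⁻¹ / (q - (q : ℂ)⁻¹)))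
  convert hjet.congr' (eventually_mem_nhdsWithin.mono fun z hz => (Dq_eq_of_ne_zero hq0 F hz).symm)
    using 1
  · rw [← add_mul, ← add_div, ← sub_eq_add_neg, div_self hδ, one_mul]
  · rw [htwo]; ring
  · rw [hthree]; ring

/-- The Sakaguchi-type quotient `2 z (D_q F(z))^λ / (F(z) - F(-z))`, the functional of starlikeness
with respect to symmetric points. -/
noncomputable def sakaguchiQuot (q : ℝ) (lam : ℂ) (F : ℂ → ℂ) (z : ℂ) : ℂ :=
  2 * z * Dq q F z ^ lam / (F z - F (-z))

theorem hasTwoJet_sakaguchiQuot (hq : q - q⁻¹ ≠ 0) (lam : ℂ) {F : ℂ → ℂ} {b c : ℂ}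
    (hF : HasTwoJet (fun z => F z / z) 1 b c) :
    HasTwoJet (sakaguchiQuot q lam F) 1 (lam * (symQ q 2 * b))
      ((lam * symQ q 3 - 1) * c + lam * (lam - 1) / 2 * (symQ q 2 * b) ^ 2) := by
  have hodd : HasTwoJet (fun z => F z / z + F (-1 * z) / (-1 * z)) 2 0 (2 * c) := by
    convert hF.add (hF.comp_mul_left (neg_ne_zero.2 one_ne_zero)) using 1 <;> ring
  have hquot := (((hasTwoJet_Dq hq hF).cpow lam).const_mul 2).mul (hodd.inv two_ne_zero)
  have heq : (fun z => 2 * Dq q F z ^ lam * (F z / z + F (-1 * z) / (-1 * z))⁻¹)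
      = sakaguchiQuot q lam F := by
    funext z
    rw [sakaguchiQuot, neg_one_mul, div_neg, ← sub_eq_add_neg, ← sub_div, inv_div]
    ring
  rw [heq] at hquot
  convert hquot using 1 <;> ring

theorem Dq_sub_comp_neg (F : ℂ → ℂ) {z : ℂ} (hz : z ≠ 0) :
    Dq q (fun ζ => F ζ - F (-ζ)) z = Dq q F z + Dq q F (-z) := by
  simp only [Dq, if_neg hz, if_neg (neg_ne_zero.2 hz), mul_neg, neg_div, div_neg]
  ring

theorem sakaguchiQuot_id_mul_Dq (q : ℝ) (lam : ℂ) (F : ℂ → ℂ) {z : ℂ} (hz : z ≠ 0) :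
    sakaguchiQuot q lam (fun ζ => ζ * Dq q F ζ) z =
      2 * Dq q (fun ζ => ζ * Dq q F ζ) z ^ lam / Dq q (fun ζ => F ζ - F (-ζ)) z := by
  rw [sakaguchiQuot, Dq_sub_comp_neg F hz, neg_mul, sub_neg_eq_add, ← mul_add, mul_right_comm,
    mul_comm _ z, mul_div_mul_left _ _ hz]

end SymmetricQCalculus

section Bernardi

variable {q η : ℝ}

theorem Lcoef_one (hq0 : 0 < q) (hq1 : q ≠ 1) (hη : -1 < η) : Lcoef q η 1 = 1 := by
  rw [Lcoef, Nat.cast_one, div_self (symQ_pos hq0 hq1 (by linarith)).ne']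

theorem abs_Lcoef_le_one (hq0 : 0 < q) (hq1 : q ≠ 1) (hη : -1 < η) {n : ℕ} (hn : n ≠ 0) :
    |Lcoef q η n| ≤ 1 := by
  have hn : (1 : ℝ) ≤ n := by exact_mod_cast Nat.one_le_iff_ne_zero.2 hn
  have hpos : 0 < symQ q (1 + η) := symQ_pos hq0 hq1 (by linarith)
  have hle : symQ q (1 + η) ≤ symQ q (n + η) := (symQ_strictMono hq0 hq1).monotone (by linarith)
  rw [Lcoef, abs_of_nonneg (div_nonneg hpos.le (hpos.le.trans hle))]
  exact div_le_one_of_le₀ hle (hpos.le.trans hle)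

theorem hasFPowerSeriesAt_Jop (hq0 : 0 < q) (hq1 : q ≠ 1) (hη : -1 < η) {h : ℂ → ℂ} {t : ℕ → ℂ}
    (ht : HasFPowerSeriesAt h (ofScalars ℂ t) 0) (ht0 : t 0 = 0) :
    HasFPowerSeriesAt (Jop q η h) (ofScalars ℂ fun n => (Lcoef q η n : ℂ) * t n) 0 := by
  have hle (n : ℕ) : ‖ofScalars ℂ (fun n => (Lcoef q η n : ℂ) * t n) n‖ ≤ ‖ofScalars ℂ t n‖ := by
    rw [ofScalars_norm, ofScalars_norm, norm_mul, norm_real]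
    rcases eq_or_ne n 0 with rfl | hn
    · simp [ht0]
    · exact mul_le_of_le_one_left (norm_nonneg _) (abs_Lcoef_le_one hq0 hq1 hη hn)
  have hJ := hasFPowerSeriesAt_tsum (ht.radius_pos.trans_le (radius_le_of_le hle))
  exact taylorCoeff_eq_of_hasFPowerSeriesAt ht ▸ hJ

theorem Phi_eq_sakaguchiQuot (lam mu : ℝ) (h : ℂ → ℂ) {z : ℂ} (hz : z ≠ 0) :
    Phi q η lam mu h z =
      sakaguchiQuot q lam (Jop q η h) z ^ (mu : ℂ) *
        sakaguchiQuot q lam (fun ζ => ζ * Dq q (Jop q η h) ζ) z ^ ((1 - mu : ℝ) : ℂ) := by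
  rw [sakaguchiQuot_id_mul_Dq q lam _ hz, sakaguchiQuot, Phi]

theorem hasTwoJet_Phi (hq0 : 0 < q) (hq1 : q ≠ 1) (hη : -1 < η) (lam mu : ℝ)
    {h : ℂ → ℂ} {t : ℕ → ℂ} (ht : HasFPowerSeriesAt h (ofScalars ℂ t) 0)
    (ht0 : t 0 = 0) (ht1 : t 1 = 1) :
    HasTwoJet (Phi q η lam mu h) 1 (lam * M2v q mu * symQ q 2 * Lcoef q η 2 * t 2)
      ((lam * symQ q 3 - 1) * M3v q mu * Lcoef q η 3 * t 3 +
        lam * (lam * M2v q mu ^ 2 - N2v q mu) / 2 * (symQ q 2 * Lcoef q η 2 * t 2) ^ 2) := by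
  have hq : q - q⁻¹ ≠ 0 := fun hzero =>
    (symQ_pos hq0 hq1 one_pos).ne' (by rw [symQ, hzero, div_zero])
  have hJ := hasFPowerSeriesAt_Jop hq0 hq1 hη ht ht0
  have hJ0 : Jop q η h 0 = 0 := by simp [apply_zero_of_hasFPowerSeriesAt hJ, ht0]
  have hJjet : HasTwoJet (fun z => Jop q η h z / z) 1 (Lcoef q η 2 * t 2) (Lcoef q η 3 * t 3) := by
    simpa [coeff_ofScalars, Lcoef_one hq0 hq1 hη, ht1] using
      HasTwoJet.div_id_of_hasFPowerSeriesAt hJ hJ0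
  have hDJjet := (hasTwoJet_Dq hq hJjet).congr' (eventually_mem_nhdsWithin.mono fun z hz =>
    (mul_div_cancel_left₀ (Dq q (Jop q η h) z) hz).symm)
  have hPhi := ((hasTwoJet_sakaguchiQuot hq lam hJjet).cpow mu).mul
    ((hasTwoJet_sakaguchiQuot hq lam hDJjet).cpow (1 - mu : ℝ))
  convert hPhi.congr' (eventually_mem_nhdsWithin.mono fun z hz =>
    (Phi_eq_sakaguchiQuot lam mu h hz).symm) using 1
  · ring
  · simp only [M2v]; push_cast; ring
  · simp only [M2v, M3v, N2v]; push_cast; ring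

end Bernardi

section Subordination

variable {φ u : ℂ → ℂ} {E c : ℕ → ℂ}

theorem hasTwoJet_of_cayley_eq_tsum (hu : ContinuousAt u 0) (hu0 : u 0 = 0)
    (hc : ∀ᶠ z in 𝓝 0, (1 + u z) / (1 - u z) = ∑' n, c n * z ^ n) :
    HasTwoJet u 0 (c 1 / 2) (c 2 / 2 - c 1 ^ 2 / 4) := by
  have hcont : ContinuousAt (fun z => (1 + u z) / (1 - u z)) 0 :=
    (continuousAt_const.add hu).div (continuousAt_const.sub hu) (by simp [hu0])
  have hseries := hasFPowerSeriesAt_of_eq_tsum_of_continuousAt hc hcont (by simp [hu0])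
  have hc0 : c 0 = 1 := by simpa [hu0] using (apply_zero_of_hasFPowerSeriesAt hseries).symm
  have hp : HasTwoJet (fun z => (1 + u z) / (1 - u z)) 1 (c 1) (c 2) := by
    simpa [coeff_ofScalars, hc0] using HasTwoJet.of_hasFPowerSeriesAt hseries
  have hquot := ((HasTwoJet.const (-1)).add hp).mul
    (((HasTwoJet.const 1).add hp).inv (by norm_num))
  have hne : ∀ᶠ z in 𝓝[≠] 0, u z ≠ 1 :=
    (hu.eventually_ne (by simp [hu0])).filter_mono nhdsWithin_le_nhds
  have hinv : (fun z => (-1 + (1 + u z) / (1 - u z)) * (1 + (1 + u z) / (1 - u z))⁻¹)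
      =ᶠ[𝓝[≠] 0] u := by
    filter_upwards [hne] with z hz
    have hz : 1 - u z ≠ 0 := sub_ne_zero.2 hz.symm
    field_simp
    ring
  convert hquot.congr' hinv using 1 <;> ring

theorem hasTwoJet_subordinate (hφ : ContinuousAt φ 0) (hφ0 : φ 0 = 1)
    (hE : ∀ᶠ z in 𝓝 0, φ z = ∑' n, E n * z ^ n) (hu : ContinuousAt u 0) (hu0 : u 0 = 0)
    (hc : ∀ᶠ z in 𝓝 0, (1 + u z) / (1 - u z) = ∑' n, c n * z ^ n) :
    HasTwoJet (fun z => φ (u z)) 1 (E 1 * c 1 / 2)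
      (E 1 * (c 2 / 2 - c 1 ^ 2 / 4) + E 2 * c 1 ^ 2 / 4) := by
  have hseries := hasFPowerSeriesAt_of_eq_tsum_of_continuousAt hE hφ (by simp [hφ0])
  have hE0 : E 0 = 1 := (apply_zero_of_hasFPowerSeriesAt hseries).symm.trans hφ0
  have hφjet : HasTwoJet φ 1 (E 1) (E 2) := by
    simpa [coeff_ofScalars, hE0] using HasTwoJet.of_hasFPowerSeriesAt hseries
  convert hφjet.comp hφ0 (hasTwoJet_of_cayley_eq_tsum hu hu0 hc) using 1 <;> ring

end Subordination

theorem coeff_eq_of_Phi_eq_comp {q η : ℝ} (hq0 : 0 < q) (hq1 : q ≠ 1) (hη : -1 < η)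
    {lam mu : ℝ} {h φ u : ℂ → ℂ} {t E c : ℕ → ℂ}
    (ht : HasFPowerSeriesAt h (ofScalars ℂ t) 0) (ht0 : t 0 = 0) (ht1 : t 1 = 1)
    (hφ : ContinuousAt φ 0) (hφ0 : φ 0 = 1) (hE : ∀ᶠ z in 𝓝 0, φ z = ∑' n, E n * z ^ n)
    (hu : ContinuousAt u 0) (hu0 : u 0 = 0)
    (hc : ∀ᶠ z in 𝓝 0, (1 + u z) / (1 - u z) = ∑' n, c n * z ^ n)
    (hsub : ∀ᶠ z in 𝓝[≠] 0, Phi q η lam mu h z = φ (u z)) :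
    lam * M2v q mu * symQ q 2 * Lcoef q η 2 * t 2 = E 1 * c 1 / 2 ∧
      (lam * symQ q 3 - 1) * M3v q mu * Lcoef q η 3 * t 3 +
          lam * (lam * M2v q mu ^ 2 - N2v q mu) / 2 * (symQ q 2 * Lcoef q η 2 * t 2) ^ 2 =
        E 1 * (c 2 / 2 - c 1 ^ 2 / 4) + E 2 * c 1 ^ 2 / 4 :=
  (((hasTwoJet_Phi hq0 hq1 hη lam mu ht ht0 ht1).congr' hsub).unique
    (hasTwoJet_subordinate hφ hφ0 hE hu hu0 hc)).2

theorem Thetav_eq (q η lam mu E1 : ℝ) (E : ℕ → ℂ) :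
    Thetav q η lam mu E1 E = E1 ^ 2 * Omegav q η lam mu +
      2 * (E1 - E 2) * (lam * M2v q mu * symQ q 2 * Lcoef q η 2) ^ 2 := by
  simp only [Thetav, Omegav]
  push_cast
  ring

theorem a2_sq_relations_bernardi_general {q η : ℝ} (hq0 : 0 < q) (hq1 : q ≠ 1) (hη : -1 < η)
    (lam mu : ℝ) {f g φ u v : ℂ → ℂ} {a E c d : ℕ → ℂ} {E1 : ℝ}
    (hf0 : f 0 = 0) (hf'0 : deriv f 0 = 1) (hfa : ∀ᶠ z in 𝓝 0, f z = ∑' n, a n * z ^ n)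
    (hg : AnalyticAt ℂ g 0) (hgf : ∀ᶠ z in 𝓝 0, g (f z) = z)
    (hφ : ContinuousAt φ 0) (hφ0 : φ 0 = 1) (hφE : ∀ᶠ z in 𝓝 0, φ z = ∑' n, E n * z ^ n)
    (hE1 : E 1 = E1) (hE1ne : E1 ≠ 0)
    (hu : ContinuousAt u 0) (hu0 : u 0 = 0) (hv : ContinuousAt v 0) (hv0 : v 0 = 0)
    (hsubf : ∀ᶠ z in 𝓝[≠] 0, Phi q η lam mu f z = φ (u z))
    (hsubg : ∀ᶠ w in 𝓝[≠] 0, Phi q η lam mu g w = φ (v w))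
    (hc : ∀ᶠ z in 𝓝 0, (1 + u z) / (1 - u z) = ∑' n, c n * z ^ n)
    (hd : ∀ᶠ w in 𝓝 0, (1 + v w) / (1 - v w) = ∑' n, d n * w ^ n) :
    (Omegav q η lam mu : ℂ) * a 2 ^ 2 =
        1 / 2 * (E 2 - E1) * c 1 ^ 2 + 1 / 2 * E1 * (c 2 + d 2) ∧
      Thetav q η lam mu E1 E * a 2 ^ 2 = 1 / 2 * (E1 : ℂ) ^ 3 * (c 2 + d 2) := by
  obtain ⟨hf, ha0, ha1⟩ := hasFPowerSeriesAt_of_normalized hf0 hf'0 hfa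
  have hg := hasFPowerSeriesAt_taylorCoeff hg
  obtain ⟨hb0, hb1, hb2, hb3⟩ := coeff_eq_of_left_inverse hf ha0 ha1 hg hgf
  obtain ⟨hf1, hf2⟩ := coeff_eq_of_Phi_eq_comp hq0 hq1 hη hf ha0 ha1 hφ hφ0 hφE hu hu0 hc hsubf
  obtain ⟨hg1, hg2⟩ := coeff_eq_of_Phi_eq_comp hq0 hq1 hη hg hb0 hb1 hφ hφ0 hφE hv hv0 hd hsubg
  rw [hE1] at hf1 hf2 hg1 hg2
  rw [hb2] at hg1 hg2
  rw [hb3] at hg2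
  have hd1 : d 1 = -c 1 := by
    apply mul_left_cancel₀ (ofReal_ne_zero.2 hE1ne)
    linear_combination -2 * hf1 - 2 * hg1
  rw [hd1] at hg2
  have hOmega : (Omegav q η lam mu : ℂ) * a 2 ^ 2 =
      1 / 2 * (E 2 - E1) * c 1 ^ 2 + 1 / 2 * E1 * (c 2 + d 2) := by
    simp only [Omegav]
    push_cast
    linear_combination hf2 + hg2
  refine ⟨hOmega, ?_⟩
  rw [Thetav_eq]
  linear_combination (E1 : ℂ) ^ 2 * hOmega +
    2 * (E1 - E 2) * (lam * M2v q mu * symQ q 2 * Lcoef q η 2 * a 2 + E1 * c 1 / 2) * hf1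

theorem a2_sq_relations_bernardi
    (q : ℝ) (hq0 : 0 < q) (hq1 : q < 1)
    (f g : ℂ → ℂ) (a : ℕ → ℂ)
    (hf : AnalyticOnNhd ℂ f (ball 0 1)) (hf0 : f 0 = 0) (hf'0 : deriv f 0 = 1)
    (hfa : ∀ z ∈ ball (0 : ℂ) 1, f z = ∑' n, a n * z ^ n)
    (ha0 : a 0 = 0) (ha1 : a 1 = 1)
    (hfinj : InjOn f (ball 0 1))
    (hg : AnalyticOnNhd ℂ g (ball 0 1)) (hg0 : g 0 = 0)
    (hginj : InjOn g (ball 0 1))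
    (hgf : ∀ᶠ z in nhds (0 : ℂ), g (f z) = z)
    (φ : ℂ → ℂ) (E : ℕ → ℂ) (E1 : ℝ)
    (hφa : AnalyticOnNhd ℂ φ (ball 0 1)) (hφ0 : φ 0 = 1)
    (hφre : ∀ z ∈ ball (0 : ℂ) 1, 0 < (φ z).re)
    (hφE : ∀ z ∈ ball (0 : ℂ) 1, φ z = ∑' n, E n * z ^ n)
    (hE0 : E 0 = 1) (hE1 : E 1 = (E1 : ℂ)) (hE1pos : 0 < E1)
    (lam : ℝ) (hlam : 1 ≤ lam)
    (η : ℝ) (hη : -1 < η)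
    (mu : ℝ) (hmu : 0 ≤ mu)
    (u v : ℂ → ℂ) (hu : IsSchwarz u) (hv : IsSchwarz v)
    (hsubf : ∀ z ∈ ball (0 : ℂ) 1, z ≠ 0 → Phi q η lam mu f z = φ (u z))
    (hsubg : ∀ w ∈ ball (0 : ℂ) 1, w ≠ 0 → Phi q η lam mu g w = φ (v w))
    (c d : ℕ → ℂ) (hc0 : c 0 = 1) (hd0 : d 0 = 1)
    (hc : ∀ z ∈ ball (0 : ℂ) 1, (1 + u z) / (1 - u z) = ∑' n, c n * z ^ n)
    (hd : ∀ w ∈ ball (0 : ℂ) 1, (1 + v w) / (1 - v w) = ∑' n, d n * w ^ n)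
    :
    ((Omegav q η lam mu : ℝ) : ℂ) * a 2 ^ 2 =
        1 / 2 * (E 2 - (E1 : ℂ)) * c 1 ^ 2 + 1 / 2 * (E1 : ℂ) * (c 2 + d 2) ∧
      Thetav q η lam mu E1 E * a 2 ^ 2 = 1 / 2 * (E1 : ℂ) ^ 3 * (c 2 + d 2) := by
  have near {p : ℂ → Prop} (hp : ∀ z ∈ ball (0 : ℂ) 1, p z) : ∀ᶠ z in 𝓝 0, p z :=
    mem_of_superset (ball_mem_nhds 0 one_pos) hp
  have h0 : (0 : ℂ) ∈ ball (0 : ℂ) 1 := mem_ball_self one_pos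
  exact a2_sq_relations_bernardi_general hq0 hq1.ne hη lam mu hf0 hf'0 (near hfa) (hg 0 h0) hgf
    (hφa 0 h0).continuousAt hφ0 (near hφE) hE1 hE1pos.ne' (hu.1 0 h0).continuousAt hu.2.1
    (hv.1 0 h0).continuousAt hv.2.1 (eventually_nhdsWithin_iff.2 (near hsubf))
    (eventually_nhdsWithin_iff.2 (near hsubg)) (near hc) (near hd)
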